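/- Let q ≥ 2 be an integer, let R be a symmetric q×q real matrix with nonnegative entries that is irreducible, and suppose the all-ones vector 𝟙 is an eigenvector of R: R𝟙 = λ₁𝟙, where λ₁ ≥ λ₂ ≥ ⋯ ≥ λ_q are the eigenvalues of R listed with multiplicity in decreasing order. Assume λ₂ ≤ 0, and fix reals 0 < a ≤ b. Then for every sequence (m_n) of natural numbers with a ≤ m_n/n ≤ b for all n ≥ 1, the ratio [ Σ over vectors n⃗ = (n_1,…,n_q) of nonnegative integers with n_1 + ⋯ + n_q = n of (n!/(n_1!⋯n_q!)) · (Σ_{i,j} n_i n_j R_{i,j})^{m_n} ] / [ n^{2 m_n} · λ₁^{m_n} · q^{n − m_n} · Π_{i=2}^q (1 − 2(λ_i/λ₁)(m_n/n))^{−1/2} ] tends to 1 as n → ∞. -/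

import Mathlib

/-!
After division by `q ^ n` the numerator is an expectation over multinomial counts `c` with `n`
trials and `q` equally likely outcomes. Since `R 𝟙 = λ₁ 𝟙` and `∑ j, c j = n`, diagonalising `R`
(`spectral_data`) gives `cᵀ R c = (n² λ₁ / q) * (1 - Y / n)`, where
`Y = (q / (2 n)) * ∑ i, w i * (u i ⬝ c)²` and
`w i = -2 λ_i / λ₁ ≥ 0` away from the Perron direction. Thus `Y ≥ 0` because the other eigenvalues
are nonpositive, and `Y ≤ n` because the entries of `R` are nonnegative. On this range
`(1 - Y / n) ^ m` differs from `exp (-(m / n) Y)` by at most `2 / m`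
(`abs_one_sub_pow_sub_exp_le`), so only `E exp (-t Y)` with `t = m / n` is left.

In place of a multivariate central limit theorem, each factor `exp (-s² / 2)` is written as the
average of `exp (i g s)` over a standard Gaussian `g` (`hs_single`, `hs_pi`). After exchanging the
averages, the inner one is the `n`-th power of a mean of `q` complex exponentials, by the
multinomial theorem. For fixed `g` a Taylor expansion (`norm_mean_exp_sub_exp_le`) compares it with
`exp (-∑ i, t * w i * g i ^ 2 / 2)`, with error `O(n ^ (-1/2))` uniformly in `t ≤ b`. Dominated
convergence (`gaussian_limit`) then compares `E exp (-t Y)` with the Gaussian integral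
`∏ i, (1 + t * w i) ^ (-1/2)`, which is the product in the denominator and is bounded below for
`t ∈ [a, b]`.
-/

open Filter Matrix

/-- A symmetric matrix is irreducible if no nonempty proper subset `T` of the index set
satisfies `R i j = 0` for all `i ∈ T`, `j ∉ T`. -/
def MatrixIrreducible {q : ℕ} (R : Matrix (Fin q) (Fin q) ℝ) : Prop :=
  ∀ T : Finset (Fin q), T.Nonempty → T ≠ Finset.univ →
    ∃ i ∈ T, ∃ j ∉ T, R i j ≠ 0

/-! ### Gaussian integrals -/

open MeasureTheory ProbabilityTheory Complex in
/-- Gaussian linearisation (Hubbard–Stratonovich): `exp (-s² / 2)` is the Gaussian average of the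
characters `x ↦ exp (i x s)`. -/
lemma hs_single (s : ℝ) :
    ∫ x, cexp (((x * s : ℝ) : ℂ) * I) ∂(gaussianReal 0 1) = ((Real.exp (-(s ^ 2 / 2)) : ℝ) : ℂ) := by
  have h := charFun_gaussianReal (μ := 0) (v := 1) s
  rw [charFun_apply_real] at h
  rw [ofReal_exp]
  convert h using 2
  · ext x; push_cast; ring_nf
  · push_cast; ring_nf

open MeasureTheory ProbabilityTheory in
lemma integral_exp_neg_sq_gaussian (k : ℝ) (hk : 0 ≤ k) :
    ∫ x, Real.exp (-(k * x ^ 2 / 2)) ∂(gaussianReal 0 1) = (1 + k) ^ (-(1 / 2 : ℝ)) := by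
  rw [integral_gaussianReal_eq_integral_smul one_ne_zero]
  have h : ∀ x : ℝ, gaussianPDFReal 0 1 x • Real.exp (-(k * x ^ 2 / 2))
      = (√(2 * Real.pi))⁻¹ * Real.exp (-((1 + k) / 2) * x ^ 2) := by
    intro x
    rw [gaussianPDFReal, smul_eq_mul, mul_assoc, ← Real.exp_add]
    simp only [NNReal.coe_one, mul_one, sub_zero]
    congr 2
    ring
  simp_rw [h]
  rw [integral_const_mul, integral_gaussian, ← Real.sqrt_inv, ← Real.sqrt_mul (by positivity),
    Real.sqrt_eq_rpow, Real.rpow_neg (by positivity), ← Real.inv_rpow (by positivity)]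
  congr 1
  field_simp

/-! ### Elementary inequalities -/

lemma norm_pow_sub_pow_le_mul {x y : ℂ} (hx : ‖x‖ ≤ 1) (hy : ‖y‖ ≤ 1) (n : ℕ) :
    ‖x ^ n - y ^ n‖ ≤ n * ‖x - y‖ := by
  induction n with
  | zero => simp
  | succ n ih =>
    have e : x ^ (n + 1) - y ^ (n + 1) = x ^ n * (x - y) + (x ^ n - y ^ n) * y := by ring
    rw [e]
    refine (norm_add_le _ _).trans ?_
    rw [norm_mul, norm_mul, norm_pow]
    have h1 : ‖x‖ ^ n * ‖x - y‖ ≤ 1 * ‖x - y‖ :=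
      mul_le_mul_of_nonneg_right (pow_le_one₀ (norm_nonneg _) hx) (norm_nonneg _)
    have h2 : ‖x ^ n - y ^ n‖ * ‖y‖ ≤ ‖x ^ n - y ^ n‖ * 1 :=
      mul_le_mul_of_nonneg_left hy (norm_nonneg _)
    push_cast
    linarith

/-- The error is uniform in `y ∈ [0, 1]`: it is at most `exp (-m y) * m y²`, and `s² exp (-s) ≤ 2` for
`s = m y ≥ 0`. -/
lemma abs_one_sub_pow_sub_exp_le {y : ℝ} (h0 : 0 ≤ y) (h1 : y ≤ 1) {m : ℕ} (hm : 0 < m) :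
    |(1 - y) ^ m - Real.exp (-(m * y))| ≤ 2 / m := by
  have hm' : (0 : ℝ) < m := by exact_mod_cast hm
  have e : Real.exp (-(m * y)) = Real.exp (-y) ^ m := by
    rw [← Real.exp_nat_mul]; ring_nf
  have up : (1 - y) ^ m ≤ Real.exp (-y) ^ m :=
    pow_le_pow_left₀ (by linarith) (Real.one_sub_le_exp_neg y) m
  have lo1 : Real.exp (-y) * (1 - y ^ 2) ≤ 1 - y := by
    have := mul_le_mul_of_nonneg_left (Real.add_one_le_exp y) (Real.exp_pos (-y)).le
    rw [← Real.exp_add, neg_add_cancel, Real.exp_zero] at this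
    nlinarith
  have lo2 : Real.exp (-y) ^ m * (1 - m * y ^ 2) ≤ (1 - y) ^ m := by
    have b := one_add_mul_le_pow (a := -y ^ 2) (by nlinarith) m
    calc Real.exp (-y) ^ m * (1 - m * y ^ 2) ≤ Real.exp (-y) ^ m * (1 - y ^ 2) ^ m := by
          gcongr
          convert b using 1 <;> ring
      _ = (Real.exp (-y) * (1 - y ^ 2)) ^ m := by rw [mul_pow]
      _ ≤ _ := pow_le_pow_left₀ (mul_nonneg (Real.exp_pos _).le (by nlinarith)) lo1 m
  have key : Real.exp (-(m * y)) * (m * y) ^ 2 ≤ 2 := by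
    have := Real.quadratic_le_exp_of_nonneg (x := m * y) (by positivity)
    rw [Real.exp_neg, inv_mul_le_iff₀ (Real.exp_pos _)]
    nlinarith [mul_nonneg hm'.le h0]
  rw [abs_le]
  constructor
  · have : Real.exp (-(m * y)) * (m * y ^ 2) ≤ 2 / m := by
      rw [le_div_iff₀ hm']
      calc _ = Real.exp (-(m * y)) * (m * y) ^ 2 := by ring
        _ ≤ 2 := key
    rw [e] at *
    linarith
  · rw [e]
    have : 0 ≤ 2 / (m : ℝ) := by positivity
    linarith

open Complex in
/-- Third-order comparison of the characteristic function of a uniform choice among the centred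
values `h j` with the Gaussian one of the same variance. -/
lemma norm_mean_exp_sub_exp_le {q : ℕ} (hq : 0 < q) (h : Fin q → ℝ) (hs : ∑ j, h j = 0) {δ : ℝ}
    (hδ : ∀ j, |h j| ≤ δ) (hδ0 : 0 ≤ δ) (hδ1 : δ ≤ 1) :
    ‖(∑ j, cexp ((h j : ℂ) * I)) / q - ((Real.exp (-((∑ j, h j ^ 2) / (2 * q))) : ℝ) : ℂ)‖
      ≤ 2 * δ ^ 3 := by
  have hq' : (0 : ℝ) < q := by exact_mod_cast hq
  have hqc : (q : ℂ) ≠ 0 := by exact_mod_cast hq.ne'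
  set v : ℝ := (∑ j, h j ^ 2) / (2 * q) with hv
  have hsq : ∀ j, h j ^ 2 ≤ δ ^ 2 := fun j => by
    rw [← sq_abs]; exact pow_le_pow_left₀ (abs_nonneg _) (hδ j) 2
  have hv0 : 0 ≤ v := by positivity
  have hv1 : v ≤ δ ^ 2 / 2 := by
    rw [hv, div_le_iff₀ (by positivity)]
    calc ∑ j, h j ^ 2 ≤ ∑ _j : Fin q, δ ^ 2 := Finset.sum_le_sum fun j _ => hsq j
      _ = δ ^ 2 / 2 * (2 * q) := by simp; ring
  have h1 : ∀ j, ‖cexp ((h j : ℂ) * I) - (1 + (h j : ℂ) * I - ((h j ^ 2 / 2 : ℝ) : ℂ))‖ ≤ δ ^ 3 := by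
    intro j
    have hn : ‖(h j : ℂ) * I‖ = |h j| := by simp
    have b := Complex.exp_bound (x := (h j : ℂ) * I) (by rw [hn]; exact (hδ j).trans hδ1)
      (n := 3) (by norm_num)
    rw [hn] at b
    have e : ∑ m ∈ Finset.range 3, ((h j : ℂ) * I) ^ m / (m.factorial : ℂ)
        = 1 + (h j : ℂ) * I - ((h j ^ 2 / 2 : ℝ) : ℂ) := by
      simp [Finset.sum_range_succ, Nat.factorial, mul_pow]; ring
    rw [e] at b
    refine b.trans ?_
    have : |h j| ^ 3 ≤ δ ^ 3 := pow_le_pow_left₀ (abs_nonneg _) (hδ j) 3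
    have : 0 ≤ |h j| ^ 3 := by positivity
    norm_num [Nat.factorial]
    linarith
  have h2 : ‖(((1 - v) - Real.exp (-v) : ℝ) : ℂ)‖ ≤ δ ^ 3 := by
    rw [Complex.norm_real, ← norm_neg]
    have b := Real.norm_exp_sub_one_sub_id_le (x := -v) (by
      rw [norm_neg, Real.norm_of_nonneg hv0]; nlinarith)
    rw [norm_neg, Real.norm_of_nonneg hv0] at b
    calc _ = ‖Real.exp (-v) - 1 - -v‖ := by congr 1; ring
      _ ≤ v ^ 2 := b
      _ ≤ (δ ^ 2 / 2) ^ 2 := pow_le_pow_left₀ hv0 hv1 2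
      _ = δ ^ 3 * (δ / 4) := by ring
      _ ≤ δ ^ 3 * 1 := by gcongr; linarith
      _ = δ ^ 3 := mul_one _
  have e : (∑ j, cexp ((h j : ℂ) * I)) / q - ((Real.exp (-v) : ℝ) : ℂ)
      = (∑ j, (cexp ((h j : ℂ) * I) - (1 + (h j : ℂ) * I - ((h j ^ 2 / 2 : ℝ) : ℂ)))) / q
        + (((1 - v) - Real.exp (-v) : ℝ) : ℂ) := by
    have z : ∑ j, (h j : ℂ) * I = 0 := by
      rw [← Finset.sum_mul, ← ofReal_sum, hs]; simp
    have z2 : ∑ j, ((h j ^ 2 / 2 : ℝ) : ℂ) = q * (v : ℂ) := by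
      rw [← ofReal_sum, ← Finset.sum_div, hv]
      push_cast
      field_simp
    rw [Finset.sum_sub_distrib, Finset.sum_sub_distrib, Finset.sum_add_distrib, z, z2]
    generalize ∑ j, cexp ((h j : ℂ) * I) = S
    simp only [Finset.sum_const, Finset.card_univ, Fintype.card_fin, nsmul_eq_mul, mul_one]
    push_cast
    field_simp
    ring
  rw [e]
  refine (norm_add_le _ _).trans ?_
  have h3 : ‖(∑ j, (cexp ((h j : ℂ) * I) - (1 + (h j : ℂ) * I - ((h j ^ 2 / 2 : ℝ) : ℂ)))) / (q : ℂ)‖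
      ≤ δ ^ 3 := by
    rw [norm_div, Complex.norm_natCast, div_le_iff₀ hq']
    refine (norm_sum_le _ _).trans ((Finset.sum_le_sum fun j _ => h1 j).trans ?_)
    simp [mul_comm]
  linarith

/-! ### Spectral decomposition -/

/-- An orthonormal eigenbasis `u` for the eigenvalues `lam`, in the given order. Row sums identify
`lam i0 > 0`, a simple eigenvalue because all the others are nonpositive, so every other `u i` is
orthogonal to `𝟙` and the quadratic form splits into a multiple of `(∑ j, x j) ^ 2` and a negative
semidefinite part. -/
lemma spectral_data (q : ℕ) (hq : 2 ≤ q) (i0 i1 : Fin q) (h0 : i0.val = 0) (h1 : i1.val = 1)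
    (R : Matrix (Fin q) (Fin q) ℝ) (hsymm : R.IsSymm)
    (hnonneg : ∀ i j, 0 ≤ R i j) (hirr : MatrixIrreducible R)
    (lam : Fin q → ℝ) (hanti : Antitone lam)
    (hspec : R.charpoly = ∏ i : Fin q, (Polynomial.X - Polynomial.C (lam i)))
    (hone : R *ᵥ (fun _ => (1 : ℝ)) = lam i0 • (fun _ => (1 : ℝ)))
    (hlam2 : lam i1 ≤ 0) :
    0 < lam i0 ∧ (∀ i, i ≠ i0 → lam i ≤ 0) ∧
    ∃ u : Fin q → Fin q → ℝ,
      (∀ i k, ∑ j, u i j * u k j = if i = k then 1 else 0) ∧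
      (∀ i, i ≠ i0 → ∑ j, u i j = 0) ∧
      (∀ x : Fin q → ℝ, ∑ i, ∑ j, x i * x j * R i j
        = lam i0 * (∑ j, x j) ^ 2 / q
          + ∑ i ∈ Finset.univ.erase i0, lam i * (∑ j, u i j * x j) ^ 2) := by
  have hq' : (0 : ℝ) < q := by exact_mod_cast (by omega : 0 < q)
  have hrow : ∀ i, ∑ j, R i j = lam i0 := fun i => by
    have := congrFun hone i
    simpa [Matrix.mulVec, dotProduct] using this
  have hpos : 0 < lam i0 := by
    obtain ⟨i, -, j, -, hij⟩ := hirr {i0} (by simp) (fun h => by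
      have := congrArg Finset.card h
      simp at this; omega)
    rw [← hrow i]
    exact lt_of_lt_of_le (lt_of_le_of_ne (hnonneg i j) (Ne.symm hij))
      (Finset.single_le_sum (fun k _ => hnonneg i k) (Finset.mem_univ j))
  have hneg : ∀ i, i ≠ i0 → lam i ≤ 0 := fun i hi => by
    refine (hanti ?_).trans hlam2
    rw [Fin.le_def]
    have : i.val ≠ 0 := fun h => hi (Fin.ext (h.trans h0.symm))
    omega
  have hA : R.IsHermitian := by
    rw [Matrix.IsHermitian, Matrix.conjTranspose_eq_transpose_of_trivial]; exact hsymm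
  obtain ⟨σ, hσ⟩ : ∃ σ : Fin q ≃ Fin q, ∀ i, hA.eigenvalues (σ i) = lam i := by
    have h1 := hA.sort_roots_charpoly_eq_eigenvalues₀
    have h2 : (R.charpoly.roots.map RCLike.re).sort (· ≥ ·) = List.ofFn lam := by
      rw [hspec, Polynomial.roots_prod _ _
        (by simp [Finset.prod_ne_zero_iff, Polynomial.X_sub_C_ne_zero])]
      simp only [Polynomial.roots_X_sub_C, Multiset.bind_singleton, Fin.univ_val_map,
        Multiset.map_coe, List.map_ofFn, Function.comp_def, RCLike.re_to_real, Multiset.coe_sort]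
      apply List.mergeSort_of_pairwise
      simp_rw [decide_eq_true_eq, ← List.sortedGE_iff_pairwise]
      exact hanti.sortedGE_ofFn
    rw [h2] at h1
    refine ⟨(finCongr (Fintype.card_fin q).symm).trans
      (Fintype.equivOfCardEq (Fintype.card_fin _)), fun i => ?_⟩
    simp only [Matrix.IsHermitian.eigenvalues, Equiv.trans_apply, Equiv.symm_apply_apply]
    rw [List.ofFn_congr (Fintype.card_fin q).symm lam] at h1
    have := congrFun (List.ofFn_injective h1) (finCongr (Fintype.card_fin q).symm i)
    rw [← this]
    simp
  let B := hA.eigenvectorBasis.reindex σ.symm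
  have hB : ∀ i, R *ᵥ (B i : Fin q → ℝ) = lam i • (B i : Fin q → ℝ) := fun i => by
    have := hA.mulVec_eigenvectorBasis (σ i)
    rw [hσ] at this
    simpa [B] using this
  have hin : ∀ x y : EuclideanSpace ℝ (Fin q), inner ℝ x y = ∑ j, x j * y j := fun x y => by
    simp [PiLp.inner_apply, mul_comm]
  -- self-adjointness of `R` against the eigenvectors
  have hadj : ∀ i (x : Fin q → ℝ), ∑ j, B i j * (R *ᵥ x) j = lam i * ∑ j, B i j * x j := by
    intro i x
    have : (B i : Fin q → ℝ) ⬝ᵥ (R *ᵥ x) = (lam i • (B i : Fin q → ℝ)) ⬝ᵥ x := by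
      rw [← hB i, Matrix.dotProduct_mulVec, ← Matrix.mulVec_transpose, hsymm.eq]
    rw [smul_dotProduct] at this
    simpa [dotProduct] using this
  have hpars : ∀ x y : Fin q → ℝ, ∑ i, (∑ j, B i j * x j) * (∑ j, B i j * y j) = ∑ j, x j * y j := by
    intro x y
    have := B.sum_inner_mul_inner (WithLp.toLp 2 x) (WithLp.toLp 2 y)
    simp only [hin] at this
    rw [← this]
    refine Finset.sum_congr rfl fun i _ => ?_
    congr 1
    exact Finset.sum_congr rfl fun j _ => mul_comm _ _
  have hperp : ∀ i, i ≠ i0 → ∑ j, B i j = 0 := by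
    intro i hi
    have h := hadj i (fun _ => 1)
    rw [hone] at h
    simp only [Pi.smul_apply, smul_eq_mul, mul_one, ← Finset.sum_mul] at h
    have h' : (lam i0 - lam i) * ∑ j, B i j = 0 := by linear_combination h
    rcases mul_eq_zero.1 h' with h' | h'
    · have := hneg i hi; linarith
    · exact h'
  refine ⟨hpos, hneg, fun i j => B i j, ?_, hperp, ?_⟩
  · intro i k
    rw [← hin]
    exact orthonormal_iff_ite.1 B.orthonormal i k
  · intro x
    have e1 : ∑ i, ∑ j, x i * x j * R i j = ∑ i, lam i * (∑ j, B i j * x j) ^ 2 := by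
      have := hpars x (R *ᵥ x)
      simp only [hadj] at this
      calc _ = ∑ j, x j * (R *ᵥ x) j := by
            refine Finset.sum_congr rfl fun i _ => ?_
            simp only [Matrix.mulVec, dotProduct, Finset.mul_sum]
            exact Finset.sum_congr rfl fun j _ => by ring
        _ = _ := by rw [← this]; exact Finset.sum_congr rfl fun j _ => by ring
    have e2 : (∑ j, B i0 j) * (∑ j, B i0 j) = q := by
      have := hpars (fun _ => 1) (fun _ => 1)
      simp only [mul_one] at this
      rw [Finset.sum_eq_single i0 (fun i _ hi => by rw [hperp i hi]; simp) (by simp)] at this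
      simpa using this
    have e3 : (∑ j, B i0 j * x j) * (∑ j, B i0 j) = ∑ j, x j := by
      have := hpars x (fun _ => 1)
      simp only [mul_one] at this
      rwa [Finset.sum_eq_single i0 (fun i _ hi => by rw [hperp i hi]; simp) (by simp)] at this
    rw [e1, ← Finset.add_sum_erase _ _ (Finset.mem_univ i0)]
    congr 1
    rw [← e3, mul_pow, pow_two (∑ j, B i0 j), e2]
    field_simp

/-! ### The Gaussian limit of the multinomial average -/

open MeasureTheory ProbabilityTheory Complex in
lemma hs_pi {q : ℕ} (s : Fin q → ℝ) :
    ∫ g : Fin q → ℝ, cexp (((∑ i, g i * s i : ℝ) : ℂ) * I) ∂(Measure.pi fun _ => gaussianReal 0 1)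
      = ((Real.exp (-((∑ i, s i ^ 2) / 2)) : ℝ) : ℂ) := by
  have h := integral_fintype_prod_eq_prod (μ := fun _ : Fin q => gaussianReal 0 1)
    (fun i (x : ℝ) => cexp (((x * s i : ℝ) : ℂ) * I))
  simp_rw [hs_single, ← Complex.exp_sum] at h
  rw [← ofReal_prod, ← Real.exp_sum, Finset.sum_neg_distrib, ← Finset.sum_div] at h
  rw [← h]
  refine integral_congr_ae (ae_of_all _ fun g => ?_)
  push_cast
  rw [Finset.sum_mul]

open MeasureTheory ProbabilityTheory in
lemma integral_exp_neg_sq_pi {q : ℕ} (k : Fin q → ℝ) (hk : ∀ i, 0 ≤ k i) :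
    ∫ g : Fin q → ℝ, Real.exp (-((∑ i, k i * g i ^ 2) / 2)) ∂(Measure.pi fun _ => gaussianReal 0 1)
      = ∏ i, (1 + k i) ^ (-(1 / 2 : ℝ)) := by
  have h := integral_fintype_prod_eq_prod (μ := fun _ : Fin q => gaussianReal 0 1)
    (fun i (x : ℝ) => Real.exp (-(k i * x ^ 2 / 2)))
  simp_rw [← Real.exp_sum] at h
  rw [Finset.prod_congr rfl fun i _ => integral_exp_neg_sq_gaussian (k i) (hk i)] at h
  rw [← h]
  congr 1
  ext g
  rw [Finset.sum_neg_distrib, Finset.sum_div]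

/-- Multinomial theorem, read as the (unnormalised) characteristic function of the multinomial law. -/
lemma sum_multinomial_cexp {q : ℕ} (n : ℕ) (h : Fin q → ℝ) :
    ∑ c ∈ Finset.Nat.antidiagonalTuple q n, (Nat.multinomial Finset.univ c : ℂ) *
      Complex.exp (((∑ j, (c j : ℝ) * h j : ℝ) : ℂ) * Complex.I)
      = (∑ j, Complex.exp ((h j : ℂ) * Complex.I)) ^ n := by
  rw [Finset.sum_pow_eq_sum_piAntidiag, Finset.piAntidiag_univ_fin_eq_antidiagonalTuple]
  refine Finset.sum_congr rfl fun c _ => ?_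
  congr 1
  simp_rw [← Complex.exp_nat_mul]
  rw [← Complex.exp_sum]
  congr 1
  push_cast
  rw [Finset.sum_mul]
  exact Finset.sum_congr rfl fun j _ => by ring

open MeasureTheory ProbabilityTheory Complex in
/-- Laplace transform of a nonnegative quadratic form in the multinomial counts `c`, diagonal in the
orthonormal system `u` and vanishing on `𝟙` (`hperp`). The parameter `t n` need not converge: both
sides are compared at the same `n`, and only boundedness of `t` is used. -/
lemma gaussian_limit {q : ℕ} (hq : 0 < q) (u : Fin q → Fin q → ℝ)
    (hu : ∀ i k, ∑ j, u i j * u k j = if i = k then 1 else 0)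
    (w : Fin q → ℝ) (hw : ∀ i, 0 ≤ w i) (hperp : ∀ i, w i ≠ 0 → ∑ j, u i j = 0)
    (b : ℝ) (t : ℕ → ℝ) (ht0 : ∀ n, 1 ≤ n → 0 ≤ t n) (htb : ∀ n, 1 ≤ n → t n ≤ b) :
    Tendsto (fun n : ℕ =>
      (∑ c ∈ Finset.Nat.antidiagonalTuple q n, (Nat.multinomial Finset.univ c : ℝ) *
        Real.exp (-(t n * (q / 2 / n * ∑ i, w i * (∑ j, u i j * c j) ^ 2)))) / (q : ℝ) ^ n
      - ∏ i, (1 + t n * w i) ^ (-(1 / 2 : ℝ))) atTop (nhds 0) := by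
  have hq' : (0 : ℝ) < q := by exact_mod_cast hq
  have hqc : (q : ℂ) ≠ 0 := by exact_mod_cast hq.ne'
  let γ : Measure (Fin q → ℝ) := Measure.pi fun _ => gaussianReal 0 1
  -- `r n i` scales the `i`-th eigendirection, `h n g` is the frequency seen by the multinomial law
  let r : ℕ → Fin q → ℝ := fun n i => √(t n * w i * q)
  let h : ℕ → (Fin q → ℝ) → Fin q → ℝ := fun n g j => (∑ i, g i * (r n i * u i j)) / √n
  let A : ℕ → (Fin q → ℝ) → ℂ := fun n g => (∑ j, cexp ((h n g j : ℂ) * I)) / q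
  let V : ℕ → (Fin q → ℝ) → ℝ := fun n g => (∑ i, t n * w i * g i ^ 2) / 2
  have hr2 : ∀ n, 1 ≤ n → ∀ i, r n i ^ 2 = t n * w i * q := fun n hn i =>
    Real.sq_sqrt (mul_nonneg (mul_nonneg (ht0 n hn) (hw i)) hq'.le)
  have hcont : ∀ n j, Continuous fun g => h n g j := fun n j => by
    simp only [h]; fun_prop
  have hAcont : ∀ n, Continuous (A n) := fun n => by
    have := hcont n
    simp only [A]; fun_prop
  have hVcont : ∀ n, Continuous (V n) := fun n => by
    simp only [V]; fun_prop
  have hA1 : ∀ n g, ‖A n g‖ ≤ 1 := by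
    intro n g
    simp only [A]
    rw [norm_div, Complex.norm_natCast, div_le_one hq']
    refine (norm_sum_le _ _).trans ?_
    simp [Complex.norm_exp_ofReal_mul_I]
  have hV0 : ∀ n, 1 ≤ n → ∀ g, 0 ≤ V n g := fun n hn g =>
    div_nonneg (Finset.sum_nonneg fun i _ =>
      mul_nonneg (mul_nonneg (ht0 n hn) (hw i)) (sq_nonneg _)) (by norm_num)
  -- Gaussian linearisation followed by the multinomial theorem
  have claim1 : ∀ n, 1 ≤ n →
      (((∑ c ∈ Finset.Nat.antidiagonalTuple q n, (Nat.multinomial Finset.univ c : ℝ) *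
        Real.exp (-(t n * (q / 2 / n * ∑ i, w i * (∑ j, u i j * c j) ^ 2)))) / (q : ℝ) ^ n : ℝ) : ℂ)
      = ∫ g, A n g ^ n ∂γ := by
    intro n hn
    have hn' : (0 : ℝ) < n := by exact_mod_cast hn
    have e : ∀ g, A n g ^ n = (∑ c ∈ Finset.Nat.antidiagonalTuple q n,
        (Nat.multinomial Finset.univ c : ℂ) *
          cexp (((∑ i, g i * (r n i * (∑ j, u i j * c j) / √n) : ℝ) : ℂ) * I)) / (q : ℂ) ^ n := by
      intro g
      simp only [A]
      rw [div_pow, ← sum_multinomial_cexp]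
      congr 1
      refine Finset.sum_congr rfl fun c _ => ?_
      have : ∑ j, (c j : ℝ) * h n g j = ∑ i, g i * (r n i * (∑ j, u i j * c j) / √n) := by
        simp only [h, Finset.mul_sum, Finset.sum_div]
        rw [Finset.sum_comm]
        exact Finset.sum_congr rfl fun i _ => Finset.sum_congr rfl fun j _ => by ring
      rw [this]
    simp_rw [e]
    rw [integral_div, integral_finsetSum]
    · rw [ofReal_div, ofReal_pow, ofReal_natCast, ofReal_sum]
      congr 1
      refine Finset.sum_congr rfl fun c _ => ?_
      rw [integral_const_mul, hs_pi, ofReal_mul, ofReal_natCast]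
      congr 3
      have : ∀ i, (r n i * (∑ j, u i j * c j) / √n) ^ 2
          = t n * (q / n * (w i * (∑ j, u i j * c j) ^ 2)) := by
        intro i
        rw [div_pow, mul_pow, hr2 n hn, Real.sq_sqrt hn'.le]
        ring
      rw [Finset.sum_congr rfl fun i _ => this i, ← Finset.mul_sum, ← Finset.mul_sum]
      ring
    · intro c _
      refine Integrable.const_mul (Integrable.of_bound (C := 1) ?_ ?_) _
      · exact Continuous.aestronglyMeasurable (by fun_prop)
      · exact ae_of_all _ fun g => (Complex.norm_exp_ofReal_mul_I _).le
  have claim2 : ∀ n, 1 ≤ n → ((∏ i, (1 + t n * w i) ^ (-(1 / 2 : ℝ)) : ℝ) : ℂ)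
      = ∫ g, ((Real.exp (-V n g) : ℝ) : ℂ) ∂γ := by
    intro n hn
    rw [integral_complex_ofReal]
    congr 1
    exact (integral_exp_neg_sq_pi _ fun i => mul_nonneg (ht0 n hn) (hw i)).symm
  have hint1 : ∀ n, Integrable (fun g => A n g ^ n) γ := fun n =>
    Integrable.of_bound (C := 1) ((hAcont n).pow n).aestronglyMeasurable
      (ae_of_all _ fun g => by rw [norm_pow]; exact pow_le_one₀ (norm_nonneg _) (hA1 n g))
  have hexp1 : ∀ n, 1 ≤ n → ∀ g, ‖((Real.exp (-V n g) : ℝ) : ℂ)‖ ≤ 1 := fun n hn g => by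
    rw [Complex.norm_real, Real.norm_of_nonneg (Real.exp_pos _).le, Real.exp_le_one_iff]
    linarith [hV0 n hn g]
  have hmeas2 : ∀ n, AEStronglyMeasurable (fun g => ((Real.exp (-V n g) : ℝ) : ℂ)) γ := fun n => by
    have := hVcont n
    exact Continuous.aestronglyMeasurable (by fun_prop)
  have hint2 : ∀ n, 1 ≤ n → Integrable (fun g => ((Real.exp (-V n g) : ℝ) : ℂ)) γ := fun n hn =>
    Integrable.of_bound (C := 1) (hmeas2 n) (ae_of_all _ fun g => hexp1 n hn g)
  -- pointwise bound for the characteristic functions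
  have hpt : ∀ g, ∃ K : ℝ, 0 ≤ K ∧ ∀ n : ℕ, 1 ≤ n → K ^ 2 ≤ n →
      ‖A n g ^ n - ((Real.exp (-V n g) : ℝ) : ℂ)‖ ≤ 2 * K ^ 3 / √n := by
    intro g
    let K : ℝ := ∑ j, ∑ i, |g i| * (√(b * w i * q) * |u i j|)
    have hK0 : 0 ≤ K := by positivity
    refine ⟨K, hK0, fun n hn hKn => ?_⟩
    have hn' : (0 : ℝ) < n := by exact_mod_cast hn
    have hsn : 0 < √(n : ℝ) := Real.sqrt_pos.2 hn'
    have hb : ∀ j, |h n g j| ≤ K / √n := by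
      intro j
      simp only [h]
      rw [abs_div, abs_of_pos hsn]
      gcongr
      calc |∑ i, g i * (r n i * u i j)| ≤ ∑ i, |g i * (r n i * u i j)| :=
            Finset.abs_sum_le_sum_abs _ _
        _ ≤ ∑ i, |g i| * (√(b * w i * q) * |u i j|) := by
            refine Finset.sum_le_sum fun i _ => ?_
            rw [abs_mul, abs_mul, abs_of_nonneg (Real.sqrt_nonneg _)]
            have := htb n hn
            have := hw i
            gcongr
        _ ≤ K := Finset.single_le_sum (f := fun j => ∑ i, |g i| * (√(b * w i * q) * |u i j|))
            (fun j _ => by positivity) (Finset.mem_univ j)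
    have hsum : ∑ j, h n g j = 0 := by
      simp only [h]
      rw [← Finset.sum_div, Finset.sum_comm]
      simp_rw [← Finset.mul_sum]
      rw [Finset.sum_eq_zero, zero_div]
      intro i _
      by_cases hwi : w i = 0
      · simp [r, hwi]
      · rw [hperp i hwi]; simp
    have hsq : ∑ j, h n g j ^ 2 = (∑ i, t n * w i * g i ^ 2) * q / n := by
      simp only [h, div_pow, Real.sq_sqrt hn'.le]
      rw [← Finset.sum_div]
      congr 1
      -- the norm of `∑ i, (g i * r n i) • u i`, by orthonormality
      calc ∑ j, (∑ i, g i * (r n i * u i j)) ^ 2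
          = ∑ j, ∑ i, ∑ k, (g i * r n i * (g k * r n k)) * (u i j * u k j) := by
            refine Finset.sum_congr rfl fun j _ => ?_
            rw [pow_two, Finset.sum_mul_sum]
            exact Finset.sum_congr rfl fun i _ => Finset.sum_congr rfl fun k _ => by ring
        _ = ∑ i, ∑ k, (g i * r n i * (g k * r n k)) * ∑ j, u i j * u k j := by
            rw [Finset.sum_comm]
            refine Finset.sum_congr rfl fun i _ => ?_
            rw [Finset.sum_comm]
            simp_rw [Finset.mul_sum]
        _ = ∑ i, g i ^ 2 * r n i ^ 2 := by
            simp_rw [hu]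
            simp only [mul_ite, mul_one, mul_zero, Finset.sum_ite_eq, Finset.mem_univ, if_true]
            exact Finset.sum_congr rfl fun i _ => by ring
        _ = _ := by
            simp_rw [hr2 n hn]
            rw [Finset.sum_mul]
            exact Finset.sum_congr rfl fun i _ => by ring
    have hv : (∑ j, h n g j ^ 2) / (2 * q) = V n g / n := by
      rw [hsq]; simp only [V]; field_simp
    have hδ1 : K / √n ≤ 1 := by
      rw [div_le_one hsn]
      exact Real.le_sqrt_of_sq_le hKn
    have key := norm_mean_exp_sub_exp_le hq (h n g) hsum hb (by positivity) hδ1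
    rw [hv] at key
    have hpow : ((Real.exp (-V n g) : ℝ) : ℂ) = ((Real.exp (-(V n g / n)) : ℝ) : ℂ) ^ n := by
      rw [← ofReal_pow, ← Real.exp_nat_mul]
      congr 2
      field_simp
    rw [hpow]
    refine (norm_pow_sub_pow_le_mul (hA1 n g) ?_ n).trans ?_
    · rw [Complex.norm_real, Real.norm_of_nonneg (Real.exp_pos _).le, Real.exp_le_one_iff]
      have := div_nonneg (hV0 n hn g) hn'.le
      linarith
    · calc (n : ℝ) * _ ≤ n * (2 * (K / √n) ^ 3) := by gcongr
        _ = 2 * K ^ 3 / √n := by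
          rw [div_pow, pow_succ (√(n : ℝ)) 2, Real.sq_sqrt hn'.le]
          field_simp
  have hlim : Tendsto (fun n => ∫ g, (A n g ^ n - ((Real.exp (-V n g) : ℝ) : ℂ)) ∂γ) atTop
      (nhds (∫ _g, (0 : ℂ) ∂γ)) := by
    refine tendsto_integral_filter_of_dominated_convergence (fun _ => 2) ?_ ?_ ?_ ?_
    · exact Eventually.of_forall fun n =>
        ((hAcont n).pow n).aestronglyMeasurable.sub (hmeas2 n)
    · filter_upwards [eventually_ge_atTop 1] with n hn
      refine ae_of_all _ fun g => (norm_sub_le _ _).trans ?_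
      have h1 : ‖A n g ^ n‖ ≤ 1 := by
        rw [norm_pow]; exact pow_le_one₀ (norm_nonneg _) (hA1 n g)
      linarith [hexp1 n hn g]
    · exact integrable_const _
    · refine ae_of_all _ fun g => ?_
      obtain ⟨K, hK0, hK⟩ := hpt g
      have hz : Tendsto (fun n : ℕ => 2 * K ^ 3 / √(n : ℝ)) atTop (nhds 0) :=
        tendsto_const_nhds.div_atTop
          (Real.tendsto_sqrt_atTop.comp tendsto_natCast_atTop_atTop)
      refine squeeze_zero_norm' ?_ hz
      filter_upwards [eventually_ge_atTop 1, eventually_ge_atTop ⌈K ^ 2⌉₊] with n hn hn2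
      exact hK n hn (Nat.ceil_le.1 hn2)
  rw [integral_zero] at hlim
  rw [← tendsto_ofReal_iff, ofReal_zero]
  refine hlim.congr' ?_
  filter_upwards [eventually_ge_atTop 1] with n hn
  rw [integral_sub (hint1 n) (hint2 n hn), ← claim1 n hn, ← claim2 n hn, ofReal_sub]

/-! ### The asymptotic formula -/

theorem regular_matrix_multigraph_asymptotics (q : ℕ) (hq : 2 ≤ q)
    (R : Matrix (Fin q) (Fin q) ℝ) (hsymm : R.IsSymm)
    (hnonneg : ∀ i j, 0 ≤ R i j) (hirr : MatrixIrreducible R)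
    (lam : Fin q → ℝ) (hanti : Antitone lam)
    (hspec : R.charpoly = ∏ i : Fin q, (Polynomial.X - Polynomial.C (lam i)))
    (hone : R *ᵥ (fun _ => (1 : ℝ)) = lam ⟨0, by omega⟩ • (fun _ => (1 : ℝ)))
    (hlam2 : lam ⟨1, by omega⟩ ≤ 0)
    (a b : ℝ) (ha : 0 < a) (hab : a ≤ b) (m : ℕ → ℕ)
    (hm : ∀ n : ℕ, 1 ≤ n → a ≤ (m n : ℝ) / n ∧ (m n : ℝ) / n ≤ b) :
    Tendsto (fun n : ℕ =>
      (∑ c ∈ Finset.Nat.antidiagonalTuple q n,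
        (Nat.multinomial Finset.univ c : ℝ) *
          (∑ i : Fin q, ∑ j : Fin q, (c i : ℝ) * (c j : ℝ) * R i j) ^ (m n)) /
        ( (n : ℝ) ^ (2 * m n) * (lam ⟨0, by omega⟩) ^ (m n) *
          ((q : ℝ) ^ n / (q : ℝ) ^ (m n)) *
          ∏ i ∈ Finset.univ.erase (⟨0, by omega⟩ : Fin q),
            (1 - 2 * (lam i / lam ⟨0, by omega⟩) * ((m n : ℝ) / n)) ^ (-(1 / 2 : ℝ)) ))
      atTop (nhds 1) := by
  obtain ⟨hpos, hneg, u, hu, hperp, hquad⟩ :=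
    spectral_data q hq _ _ rfl rfl R hsymm hnonneg hirr lam hanti hspec hone hlam2
  set i0 : Fin q := ⟨0, by omega⟩ with hi0
  have hq' : (0 : ℝ) < q := by exact_mod_cast (by omega : 0 < q)
  -- the weight of the Perron direction is set to `0`, since the total count there is fixed
  let w : Fin q → ℝ := fun i => if i = i0 then 0 else -(2 * (lam i / lam i0))
  have hw : ∀ i, 0 ≤ w i := fun i => by
    by_cases h : i = i0
    · simp [w, h]
    · have := div_nonpos_of_nonpos_of_nonneg (hneg i h) hpos.le
      simp only [w, h, if_false]; linarith
  have hwp : ∀ i, w i ≠ 0 → ∑ j, u i j = 0 := fun i hi =>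
    hperp i fun h => hi (by simp [w, h])
  let t : ℕ → ℝ := fun n => (m n : ℝ) / n
  have ht0 : ∀ n, 1 ≤ n → 0 ≤ t n := fun n hn => ha.le.trans (hm n hn).1
  let Y : ℕ → (Fin q → ℕ) → ℝ := fun n c => q / 2 / n * ∑ i, w i * (∑ j, u i j * c j) ^ 2
  let D : ℕ → ℝ := fun n => ∏ i, (1 + t n * w i) ^ (-(1 / 2 : ℝ))
  let G : ℕ → ℝ := fun n => (∑ c ∈ Finset.Nat.antidiagonalTuple q n,
    (Nat.multinomial Finset.univ c : ℝ) * Real.exp (-(t n * Y n c))) / (q : ℝ) ^ n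
  let F : ℕ → ℝ := fun n => (∑ c ∈ Finset.Nat.antidiagonalTuple q n,
    (Nat.multinomial Finset.univ c : ℝ) * (1 - Y n c / n) ^ (m n)) / (q : ℝ) ^ n
  have hGD : Tendsto (fun n => G n - D n) atTop (nhds 0) :=
    gaussian_limit (by omega) u hu w hw hwp b t ht0 fun n hn => (hm n hn).2
  have hform : ∀ n, 1 ≤ n → ∀ c ∈ Finset.Nat.antidiagonalTuple q n,
      ∑ i, ∑ j, (c i : ℝ) * (c j : ℝ) * R i j
        = (n : ℝ) ^ 2 * lam i0 / q * (1 - Y n c / n) := by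
    intro n hn c hc
    have hn' : (0 : ℝ) < n := by exact_mod_cast hn
    have hsum : ∑ j, (c j : ℝ) = n := by
      exact_mod_cast (Finset.Nat.mem_antidiagonalTuple.1 hc)
    have hw' : ∑ i, w i * (∑ j, u i j * c j) ^ 2
        = -(2 / lam i0) * ∑ i ∈ Finset.univ.erase i0, lam i * (∑ j, u i j * c j) ^ 2 := by
      rw [← Finset.add_sum_erase _ _ (Finset.mem_univ i0), Finset.mul_sum]
      simp only [w, if_true, zero_mul, zero_add]
      refine Finset.sum_congr rfl fun i hi => ?_
      rw [if_neg (Finset.ne_of_mem_erase hi)]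
      ring
    rw [hquad, hsum]
    simp only [Y]
    rw [hw']
    field_simp
    ring
  have hmpos : ∀ n, 1 ≤ n → 0 < m n := fun n hn => by
    by_contra h
    have h0 : m n = 0 := by omega
    have := (hm n hn).1
    rw [h0] at this
    simp at this
    linarith
  have hFG : ∀ n, 1 ≤ n → |F n - G n| ≤ 2 / m n := by
    intro n hn
    have hn' : (0 : ℝ) < n := by exact_mod_cast hn
    have htot : ∑ c ∈ Finset.Nat.antidiagonalTuple q n, (Nat.multinomial Finset.univ c : ℝ)
        = (q : ℝ) ^ n := by
      have := Finset.sum_pow_eq_sum_piAntidiag Finset.univ (fun _ : Fin q => (1 : ℝ)) n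
      rw [Finset.piAntidiag_univ_fin_eq_antidiagonalTuple] at this
      simpa using this.symm
    simp only [F, G]
    rw [← sub_div, ← Finset.sum_sub_distrib, abs_div, abs_of_pos (pow_pos hq' n),
      div_le_iff₀ (pow_pos hq' n), ← htot, Finset.mul_sum]
    refine (Finset.abs_sum_le_sum_abs _ _).trans (Finset.sum_le_sum fun c hc => ?_)
    rw [← mul_sub, abs_mul, Nat.abs_cast, mul_comm]
    gcongr
    have hY0 : 0 ≤ Y n c / n := by
      have : ∀ i, 0 ≤ w i * (∑ j, u i j * c j) ^ 2 := fun i => mul_nonneg (hw i) (sq_nonneg _)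
      have := Finset.sum_nonneg fun i (_ : i ∈ Finset.univ) => this i
      simp only [Y]
      positivity
    -- nonnegativity of the quadratic form gives the upper bound on `Y`
    have hY1 : Y n c / n ≤ 1 := by
      have h1 : 0 ≤ ∑ i, ∑ j, (c i : ℝ) * (c j : ℝ) * R i j :=
        Finset.sum_nonneg fun i _ => Finset.sum_nonneg fun j _ =>
          mul_nonneg (by positivity) (hnonneg i j)
      rw [hform n hn c hc] at h1
      have h2 : 0 < (n : ℝ) ^ 2 * lam i0 / q := by positivity
      have := nonneg_of_mul_nonneg_right h1 h2
      linarith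
    have htY : t n * Y n c = m n * (Y n c / n) := by simp only [t]; ring
    rw [htY]
    exact abs_one_sub_pow_sub_exp_le hY0 hY1 (hmpos n hn)
  have hFG0 : Tendsto (fun n => F n - G n) atTop (nhds 0) := by
    have hz : Tendsto (fun n : ℕ => 2 / a / (n : ℝ)) atTop (nhds 0) :=
      tendsto_const_nhds.div_atTop tendsto_natCast_atTop_atTop
    refine squeeze_zero_norm' ?_ hz
    filter_upwards [eventually_ge_atTop 1] with n hn
    have hn' : (0 : ℝ) < n := by exact_mod_cast hn
    refine (hFG n hn).trans ?_
    rw [div_div]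
    gcongr
    exact (le_div_iff₀ hn').1 (hm n hn).1
  have hFD : Tendsto (fun n => F n - D n) atTop (nhds 0) := by
    have := hFG0.add hGD
    simpa using this
  let d : ℝ := ∏ i, (1 + b * w i) ^ (-(1 / 2 : ℝ))
  have hb0 : 0 ≤ b := ha.le.trans hab
  have hd : 0 < d := Finset.prod_pos fun i _ =>
    Real.rpow_pos_of_pos (by have := mul_nonneg hb0 (hw i); linarith) _
  have hdD : ∀ n, 1 ≤ n → d ≤ D n := fun n hn => by
    refine Finset.prod_le_prod (fun i _ => Real.rpow_nonneg
      (by have := mul_nonneg hb0 (hw i); linarith) _) fun i _ => ?_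
    refine Real.rpow_le_rpow_of_nonpos
      (by have := mul_nonneg (ht0 n hn) (hw i); linarith) ?_ (by norm_num)
    have := mul_le_mul_of_nonneg_right (hm n hn).2 (hw i)
    linarith
  have hratio : Tendsto (fun n => F n / D n) atTop (nhds 1) := by
    rw [tendsto_iff_norm_sub_tendsto_zero]
    have hz : Tendsto (fun n => ‖F n - D n‖ / d) atTop (nhds 0) := by
      simpa using hFD.norm.div_const d
    refine squeeze_zero' (Eventually.of_forall fun n => norm_nonneg _) ?_ hz
    filter_upwards [eventually_ge_atTop 1] with n hn
    have hDn : 0 < D n := hd.trans_le (hdD n hn)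
    rw [div_sub_one hDn.ne', norm_div, Real.norm_of_nonneg hDn.le]
    have := hdD n hn
    gcongr
  refine hratio.congr' ?_
  filter_upwards [eventually_ge_atTop 1] with n hn
  have hn' : (0 : ℝ) < n := by exact_mod_cast hn
  have hD : D n = ∏ i ∈ Finset.univ.erase i0,
      (1 - 2 * (lam i / lam i0) * ((m n : ℝ) / n)) ^ (-(1 / 2 : ℝ)) := by
    simp only [D]
    rw [← Finset.mul_prod_erase _ _ (Finset.mem_univ i0)]
    simp only [w, if_true, mul_zero, add_zero, Real.one_rpow, one_mul]
    refine Finset.prod_congr rfl fun i hi => ?_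
    rw [if_neg (Finset.ne_of_mem_erase hi)]
    congr 1
    simp only [t]
    ring
  rw [← hD, Finset.sum_congr rfl fun c hc => by rw [hform n hn c hc, mul_pow]]
  have hDn : D n ≠ 0 := (hd.trans_le (hdD n hn)).ne'
  simp only [F]
  rw [Finset.sum_congr rfl fun c _ => mul_left_comm _ _ _, ← Finset.mul_sum, div_pow, mul_pow,
    ← pow_mul]
  generalize ∑ c ∈ Finset.Nat.antidiagonalTuple q n,
    (Nat.multinomial Finset.univ c : ℝ) * (1 - Y n c / n) ^ (m n) = S
  have h1 : (n : ℝ) ^ (2 * m n) ≠ 0 := (pow_pos hn' _).ne'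
  have h2 : lam i0 ^ m n ≠ 0 := (pow_pos hpos _).ne'
  have h3 : (q : ℝ) ^ m n ≠ 0 := (pow_pos hq' _).ne'
  have h4 : (q : ℝ) ^ n ≠ 0 := (pow_pos hq' _).ne'
  field_simp
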